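/- Let a be an element of a homogeneous effect algebra E. The following are equivalent: (a) a is sharp, i.e. the infimum a ∧ a' exists and equals 0; (b) a is central in every block of E which contains a; (c) a is central in some block of E. -/

import Mathlib

/-- An effect algebra: a partial commutative, associative operation `oplus`
(with definedness encoded via `Option`), constants `zero` and `one`,
unique orthosupplements, and `a ⊕ 1` defined only for `a = 0`. -/
structure EffectAlgebra (E : Type*) where
  oplus : E → E → Option E
  zero : E
  one : E
  comm : ∀ a b, oplus a b = oplus b a
  assoc : ∀ a b c ab abc, oplus a b = some ab → oplus ab c = some abc →
    ∃ bc, oplus b c = some bc ∧ oplus a bc = some abc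
  compl_exists : ∀ a, ∃ b, oplus a b = some one
  compl_unique : ∀ a b c, oplus a b = some one → oplus a c = some one → b = c
  add_one : ∀ a b, oplus a one = some b → a = zero

namespace EffectAlgebra

variable {E : Type*} (A : EffectAlgebra E)

/-- `a ⊥ b` : the sum `a ⊕ b` is defined. -/
def Perp (a b : E) : Prop := (A.oplus a b).isSome

/-- `a ≤ b` iff `b = a ⊕ c` for some `c`. -/
def le (a b : E) : Prop := ∃ c, A.oplus a c = some b

/-- The orthosupplement `a'`: the unique `b` with `a ⊕ b = 1`. -/
noncomputable def compl (a : E) : E :=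
  @Classical.epsilon E ⟨A.zero⟩ fun b => A.oplus a b = some A.one

/-- `a ⊖ b` : the unique `c` with `b ⊕ c = a` (defined when `b ≤ a`). -/
noncomputable def ominus (a b : E) : E :=
  @Classical.epsilon E ⟨A.zero⟩ fun c => A.oplus b c = some a

/-- Homogeneity. -/
def Homogeneous : Prop :=
  ∀ u v₁ v₂ s, A.oplus v₁ v₂ = some s → A.le u s → A.le u (A.compl s) →
    ∃ u₁ u₂, A.le u₁ v₁ ∧ A.le u₂ v₂ ∧ A.oplus u₁ u₂ = some u

/-- Riesz decomposition property. -/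
def RDP : Prop :=
  ∀ u v₁ v₂ s, A.oplus v₁ v₂ = some s → A.le u s →
    ∃ u₁ u₂, A.le u₁ v₁ ∧ A.le u₂ v₂ ∧ A.oplus u₁ u₂ = some u

/-- The sum `c₁ ⊕ … ⊕ cₙ` of a finite family (a list); `some s` iff the family
is orthogonal with sum `s`. -/
def sumList : List E → Option E
  | [] => some A.zero
  | x :: xs => (sumList xs).bind fun s => A.oplus x s

/-- The subfamily of `C` indexed by a set of indices `S ⊆ {1,…,n}`. -/
def pickList (C : List E) (S : Finset (Fin C.length)) : List E :=
  (S.sort (· ≤ ·)).map C.get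

/-- `C` is an orthogonal cover of `M`. -/
def IsCoverOf (C : List E) (M : Set E) : Prop :=
  (A.sumList C).isSome ∧
    ∀ a ∈ M, ∃ S : Finset (Fin C.length), A.sumList (pickList C S) = some a

/-- `M` is compatible with covers in `X`: every finite subset of `M` has an
orthogonal cover with range contained in `X`. -/
def CompatWithCoversIn (M X : Set E) : Prop :=
  ∀ F : Finset E, ↑F ⊆ M →
    ∃ C : List E, (∀ c ∈ C, c ∈ X) ∧ A.IsCoverOf C ↑F

/-- `M` is compatible (with covers in `E`). -/
def Compatible (M : Set E) : Prop := A.CompatWithCoversIn M Set.univ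

/-- `M` is internally compatible. -/
def InternallyCompatible (M : Set E) : Prop := A.CompatWithCoversIn M M

/-- `D` is a refinement of `C`: a partition `{P i}` of the index set of `D`
with `C i = ⊕_{j ∈ P i} D j`. -/
def IsRefinement (D C : List E) : Prop :=
  ∃ P : Fin C.length → Finset (Fin D.length),
    (∀ i j, i ≠ j → Disjoint (P i) (P j)) ∧
    (∀ k, ∃ i, k ∈ P i) ∧
    (∀ i, A.sumList (pickList D (P i)) = some (C.get i))

/-- One step of the closure construction `M ↦ M₁`. -/
def closureStep (M : Set E) : Set E :=
  {x | ∃ y ∈ M, A.le x y ∧ A.le x (A.compl y)} ∪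
  {z | ∃ y ∈ M, ∃ x, A.le x y ∧ A.le x (A.compl y) ∧ A.oplus x z = some y}

/-- The sets `Mₙ`. -/
def closureSeq (M : Set E) (n : ℕ) : Set E := (A.closureStep)^[n] M

/-- The closure `M̄ = ⋃ₙ Mₙ`. -/
def closure (M : Set E) : Set E := ⋃ n, A.closureSeq M n

/-- `B` is a sub-effect algebra of `E`. -/
def IsSubEA (B : Set E) : Prop :=
  A.one ∈ B ∧ ∀ a ∈ B, ∀ b ∈ B, A.le b a → A.ominus a b ∈ B

/-- The Riesz decomposition property for (the effect algebra on) a subset `B`. -/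
def RDPOn (B : Set E) : Prop :=
  ∀ u v₁ v₂ s, u ∈ B → v₁ ∈ B → v₂ ∈ B → A.oplus v₁ v₂ = some s → A.le u s →
    ∃ u₁ u₂, u₁ ∈ B ∧ u₂ ∈ B ∧ A.le u₁ v₁ ∧ A.le u₂ v₂ ∧ A.oplus u₁ u₂ = some u

/-- Homogeneity for (the effect algebra on) a subset `B`. -/
def HomogeneousOn (B : Set E) : Prop :=
  ∀ u v₁ v₂ s, u ∈ B → v₁ ∈ B → v₂ ∈ B → A.oplus v₁ v₂ = some s →
    A.le u s → A.le u (A.compl s) →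
    ∃ u₁ u₂, u₁ ∈ B ∧ u₂ ∈ B ∧ A.le u₁ v₁ ∧ A.le u₂ v₂ ∧ A.oplus u₁ u₂ = some u

/-- A block: a maximal sub-effect algebra satisfying the Riesz decomposition
property. -/
def IsBlock (B : Set E) : Prop :=
  A.IsSubEA B ∧ A.RDPOn B ∧
    ∀ B', A.IsSubEA B' → A.RDPOn B' → B ⊆ B' → B' = B

/-- A block of the sub-effect algebra on `F`: a maximal sub-effect algebra of
`F` satisfying the Riesz decomposition property. -/
def IsBlockIn (F B : Set E) : Prop :=
  B ⊆ F ∧ A.IsSubEA B ∧ A.RDPOn B ∧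
    ∀ B', B' ⊆ F → A.IsSubEA B' → A.RDPOn B' → B ⊆ B' → B' = B

/-- `a` is sharp: the infimum `a ∧ a'` exists and equals `0`, i.e. every common
lower bound of `a` and `a'` is `0`. -/
def Sharp (a : E) : Prop :=
  ∀ b, A.le b a → A.le b (A.compl a) → b = A.zero

/-- `a` is sharp in the sub-effect algebra on `F`. -/
def SharpIn (F : Set E) (a : E) : Prop :=
  a ∈ F ∧ ∀ b ∈ F, A.le b a → A.le b (A.compl a) → b = A.zero

/-- `a` is principal. -/
def Principal (a : E) : Prop :=
  ∀ x y s, A.le x a → A.le y a → A.oplus x y = some s → A.le s a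

/-- `a` is principal in the sub-effect algebra on `B`. -/
def PrincipalIn (B : Set E) (a : E) : Prop :=
  a ∈ B ∧ ∀ x ∈ B, ∀ y ∈ B, ∀ s, A.le x a → A.le y a →
    A.oplus x y = some s → A.le s a

/-- `a` is central: principal, and every `b` has a unique decomposition
`b = b₁ ⊕ b₂` with `b₁ ≤ a`, `b₂ ≤ a'`. -/
def Central (a : E) : Prop :=
  A.Principal a ∧ ∀ b, ∃! p : E × E,
    A.le p.1 a ∧ A.le p.2 (A.compl a) ∧ A.oplus p.1 p.2 = some b

/-- `a` is central in the sub-effect algebra on `B`. -/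
def CentralIn (B : Set E) (a : E) : Prop :=
  A.PrincipalIn B a ∧ ∀ b ∈ B, ∃! p : E × E,
    p.1 ∈ B ∧ p.2 ∈ B ∧ A.le p.1 a ∧ A.le p.2 (A.compl a) ∧
      A.oplus p.1 p.2 = some b

/-- The center `C(E)`. -/
def center : Set E := {a | A.Central a}

/-- The compatibility center `K(E)`: the intersection of all blocks. -/
def compatCenter : Set E := {x | ∀ B, A.IsBlock B → x ∈ B}

end EffectAlgebra

/-!
A block `B` containing `a` has Riesz decompositions, so a sharp `a` splits every element of `B`
into a part below `a` and a part below `a'`, and the two parts cannot interact. Conversely, if `a`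
is principal in `B` and `w ≤ a, a'`, then `w ∈ B` would force `a ⊕ w ≤ a`, hence `w = 0`. So
everything rests on two facts about a homogeneous `E`: every element lies in a block, and a block
contains every `u` with `u ≤ y, y'` for some `y ∈ B`.

Both come from systems of partitions of `1` (finite families with sum `1`) that are directed under
refinement, such as `{{a, a'}}` or all partitions of `1` in a block. Homogeneity says that splitting
a member `x ⊕ y` with `x ≤ (x ⊕ y)'` into `x, y` can be carried over to any refinement, so closing
a directed system under such splittings leaves it directed. The partial sums of a closed directed
system form a sub-effect algebra with the Riesz decomposition property, and by Zorn's lemma this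
extends to a block.
-/

section Refinement

variable {M : Type*}

theorem exists_add_add_of_multiset_add_eq_add {S S' T T' : Multiset M} (h : S + S' = T + T') :
    ∃ P Q P' Q', S = P + Q ∧ S' = P' + Q' ∧ T = P + P' ∧ T' = Q + Q' := by
  classical
  refine ⟨S ∩ T, S - T, T - S, S' - (T - S), ?_, ?_, ?_, ?_⟩ <;> ext x <;>
    have := congrArg (Multiset.count x) h <;>
    simp only [Multiset.count_add, Multiset.count_inter, Multiset.count_sub] at * <;> omega

variable [AddCommMonoid M]

/-- `Refines D C`: the family `D` arises from `C` by replacing each member `c` with a (possibly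
empty) family of sum `c`. Families are multisets, so that no indexing is needed. -/
def Refines (D C : Multiset M) : Prop :=
  ∃ L : Multiset (Multiset M), Multiset.Rel (fun c s => s.sum = c) C L ∧ L.join = D

namespace Refines

variable {C C' D D' F S : Multiset M} {c : M}

theorem eq_zero (h : Refines D 0) : D = 0 := by
  obtain ⟨L, hL, rfl⟩ := h
  rw [Multiset.rel_zero_left.1 hL, Multiset.join_zero]

theorem singleton (hS : S.sum = c) : Refines S {c} :=
  ⟨{S}, Multiset.Rel.cons hS Multiset.Rel.zero, by simp⟩

theorem add (h : Refines D C) (h' : Refines D' C') : Refines (D + D') (C + C') := by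
  obtain ⟨L, hL, rfl⟩ := h
  obtain ⟨L', hL', rfl⟩ := h'
  exact ⟨L + L', hL.add hL', Multiset.join_add L L'⟩

theorem cons (hS : S.sum = c) (h : Refines D C) : Refines (S + D) (c ::ₘ C) :=
  (singleton hS).add h

theorem cons_cons {x y : M} (hc : x + y = c) (h : Refines D C) :
    Refines (x ::ₘ y ::ₘ D) (c ::ₘ C) := by
  simpa only [Multiset.insert_eq_cons, Multiset.cons_add, Multiset.singleton_add] using
    cons ((Multiset.sum_pair x y).trans hc) h

theorem exists_of_add (h : Refines D (C + C')) :
    ∃ D₁ D₂, D = D₁ + D₂ ∧ Refines D₁ C ∧ Refines D₂ C' := by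
  obtain ⟨L, hL, rfl⟩ := h
  obtain ⟨L₁, L₂, h₁, h₂, rfl⟩ := Multiset.rel_add_left.1 hL
  exact ⟨L₁.join, L₂.join, Multiset.join_add L₁ L₂, ⟨L₁, h₁, rfl⟩, ⟨L₂, h₂, rfl⟩⟩

theorem exists_of_cons (h : Refines D (c ::ₘ C)) :
    ∃ S D', D = S + D' ∧ S.sum = c ∧ Refines D' C := by
  obtain ⟨L, hL, rfl⟩ := h
  obtain ⟨S, L', hS, hL', rfl⟩ := Multiset.rel_cons_left.1 hL
  exact ⟨S, L'.join, Multiset.join_cons S L', hS, L', hL', rfl⟩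

theorem refl (C : Multiset M) : Refines C C := by
  induction C using Multiset.induction with
  | empty => exact ⟨0, Multiset.Rel.zero, Multiset.join_zero⟩
  | cons c C ih => exact cons (Multiset.sum_singleton c) ih

theorem sum_eq (h : Refines D C) : D.sum = C.sum := by
  induction C using Multiset.induction generalizing D with
  | empty => rw [h.eq_zero]
  | cons c C ih =>
    obtain ⟨S, D', rfl, hS, hD'⟩ := h.exists_of_cons
    rw [Multiset.sum_add, Multiset.sum_cons, hS, ih hD']

theorem trans (h : Refines F D) (h' : Refines D C) : Refines F C := by
  induction C using Multiset.induction generalizing D F with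
  | empty => rwa [h'.eq_zero] at h
  | cons c C ih =>
    obtain ⟨S, D', rfl, hS, hD'⟩ := h'.exists_of_cons
    obtain ⟨F₁, F₂, rfl, h₁, h₂⟩ := h.exists_of_add
    exact cons (h₁.sum_eq.trans hS) (ih h₂ hD')

end Refines

end Refinement

namespace EffectAlgebra

variable {E : Type*} {A : EffectAlgebra E}

section Order

variable {a b c d : E}

theorem oplus_compl (A : EffectAlgebra E) (a : E) : A.oplus a (A.compl a) = some A.one :=
  Classical.epsilon_spec (p := fun b => A.oplus a b = some A.one) (A.compl_exists a)

theorem one_oplus_zero (A : EffectAlgebra E) : A.oplus A.one A.zero = some A.one := by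
  obtain ⟨b, hb⟩ := A.compl_exists A.one
  rwa [A.add_one b A.one (by rwa [A.comm])] at hb

theorem oplus_zero (A : EffectAlgebra E) (a : E) : A.oplus a A.zero = some a := by
  have h : A.oplus (A.compl a) a = some A.one := by rw [A.comm, A.oplus_compl]
  obtain ⟨b, hab, hb⟩ := A.assoc _ a A.zero _ A.one h A.one_oplus_zero
  rw [hab, A.compl_unique _ a b h hb]

theorem oplus_left_cancel (hb : A.oplus a b = some d) (hc : A.oplus a c = some d) : b = c := by
  obtain ⟨e, he, hbe⟩ := A.assoc b a _ d A.one (by rw [A.comm, hb]) (A.oplus_compl d)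
  obtain ⟨e', he', hce⟩ := A.assoc c a _ d A.one (by rw [A.comm, hc]) (A.oplus_compl d)
  obtain rfl : e = e' := Option.some.inj (he.symm.trans he')
  exact A.compl_unique e b c (by rw [A.comm, hbe]) (by rw [A.comm, hce])

theorem eq_zero_of_oplus_eq_zero (h : A.oplus a b = some A.zero) : a = A.zero := by
  have h01 : A.oplus A.zero A.one = some A.one := by rw [A.comm, A.one_oplus_zero]
  obtain ⟨e, he, -⟩ := A.assoc b a A.one _ _ (by rw [A.comm, h]) h01
  exact A.add_one a e he

theorem ominus_eq (h : A.oplus b c = some a) : A.ominus a b = c :=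
  oplus_left_cancel (Classical.epsilon_spec (p := fun c => A.oplus b c = some a) ⟨c, h⟩) h

theorem le_one (A : EffectAlgebra E) (a : E) : A.le a A.one := ⟨_, A.oplus_compl a⟩

theorem le_of_oplus_eq_right (h : A.oplus a b = some c) : A.le b c := ⟨a, by rw [A.comm, h]⟩

theorem eq_of_oplus_zero (h : A.oplus a A.zero = some b) : a = b :=
  Option.some.inj ((A.oplus_zero a).symm.trans h)

protected theorem le_refl (A : EffectAlgebra E) (a : E) : A.le a a := ⟨_, A.oplus_zero a⟩

protected theorem le_trans (hab : A.le a b) (hbc : A.le b c) : A.le a c := by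
  obtain ⟨x, hx⟩ := hab
  obtain ⟨y, hy⟩ := hbc
  obtain ⟨z, -, hz⟩ := A.assoc _ _ _ _ _ hx hy
  exact ⟨z, hz⟩

protected theorem le_antisymm (hab : A.le a b) (hba : A.le b a) : a = b := by
  obtain ⟨x, hx⟩ := hab
  obtain ⟨y, hy⟩ := hba
  obtain ⟨z, hz, haz⟩ := A.assoc _ _ _ _ _ hx hy
  rw [oplus_left_cancel haz (A.oplus_zero a)] at hz
  rw [eq_zero_of_oplus_eq_zero hz] at hx
  exact eq_of_oplus_zero hx

end Order

/-- The total commutative monoid obtained from an effect algebra by adjoining an absorbing element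
`⊤`, the value of all undefined sums. -/
def Total (_ : EffectAlgebra E) : Type _ := Option E

/-- The embedding of an effect algebra into its total monoid. -/
def of (A : EffectAlgebra E) (a : E) : A.Total := some a

namespace Total

variable {a b c : E} {x y z : A.Total}

instance : Top A.Total := ⟨none⟩

instance : Add A.Total := ⟨fun x y => Option.bind x fun a => Option.bind y fun b => A.oplus a b⟩

instance : Zero A.Total := ⟨A.of A.zero⟩

theorem of_injective : Function.Injective A.of := fun _ _ => Option.some.inj

theorem of_add_of_eq_iff : A.of a + A.of b = A.of c ↔ A.oplus a b = some c := Iff.rfl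

theorem ne_top_iff : x ≠ ⊤ ↔ ∃ a, A.of a = x := Option.ne_none_iff_exists

theorem of_ne_top : A.of a ≠ ⊤ := Option.some_ne_none a

theorem left_ne_top (h : x + y ≠ ⊤) : x ≠ ⊤ := by
  rintro rfl
  exact h rfl

protected theorem add_comm (x y : A.Total) : x + y = y + x := by
  rcases x with _ | a <;> rcases y with _ | b
  · rfl
  · rfl
  · rfl
  · exact A.comm a b

theorem exists_of_add_eq_of (h : x + y = A.of c) :
    ∃ a b, x = A.of a ∧ y = A.of b ∧ A.oplus a b = some c := by
  have hx : x + y ≠ ⊤ := h ▸ of_ne_top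
  have hy : y + x ≠ ⊤ := by rwa [Total.add_comm y]
  obtain ⟨a, rfl⟩ := ne_top_iff.1 (left_ne_top hx)
  obtain ⟨b, rfl⟩ := ne_top_iff.1 (left_ne_top hy)
  exact ⟨a, b, rfl, rfl, h⟩

theorem add_assoc_of_eq_of (h : x + y + z = A.of c) : x + (y + z) = A.of c := by
  obtain ⟨ab, d, hxy, rfl, habc⟩ := exists_of_add_eq_of h
  obtain ⟨a, b, rfl, rfl, hab⟩ := exists_of_add_eq_of hxy
  obtain ⟨bd, hbd, habd⟩ := A.assoc _ _ _ _ _ hab habc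
  rwa [of_add_of_eq_iff.2 hbd]

protected theorem add_assoc (x y z : A.Total) : x + y + z = x + (y + z) := by
  by_cases h : x + y + z = ⊤
  · by_contra hne
    obtain ⟨d, hd⟩ := ne_top_iff.1 (fun h' => hne (h.trans h'.symm))
    rw [Total.add_comm x, Total.add_comm y] at hd
    have hd' := add_assoc_of_eq_of hd.symm
    rw [Total.add_comm z, Total.add_comm y, h] at hd'
    exact of_ne_top hd'.symm
  · obtain ⟨d, hd⟩ := ne_top_iff.1 h
    rw [← hd, add_assoc_of_eq_of hd.symm]

protected theorem add_zero (x : A.Total) : x + 0 = x := by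
  rcases x with _ | a
  · rfl
  · exact A.oplus_zero a

instance : AddCommMonoid A.Total where
  add_assoc := Total.add_assoc
  add_comm := Total.add_comm
  zero_add x := (Total.add_comm 0 x).trans (Total.add_zero x)
  add_zero := Total.add_zero
  nsmul := nsmulRec

theorem ne_top_of_add_eq (hz : z ≠ ⊤) (h : x + y = z) : x ≠ ⊤ := left_ne_top (h ▸ hz)

theorem add_left_cancel_of_ne_top (hxy : x + y ≠ ⊤) (h : x + y = x + z) : y = z := by
  obtain ⟨d, hd⟩ := ne_top_iff.1 hxy
  obtain ⟨a, b, rfl, rfl, hb⟩ := exists_of_add_eq_of hd.symm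
  obtain ⟨a', c, ha, rfl, hc⟩ := exists_of_add_eq_of (h.symm.trans hd.symm)
  rw [← of_injective ha] at hc
  rw [oplus_left_cancel hb hc]

theorem eq_zero_of_add_eq_zero (h : x + y = 0) : x = 0 := by
  obtain ⟨a, b, rfl, rfl, hab⟩ := exists_of_add_eq_of h
  rw [eq_zero_of_oplus_eq_zero hab]
  rfl

theorem refines_zero_of_sum_eq_zero {C : Multiset A.Total} (h : C.sum = 0) : Refines 0 C := by
  induction C using Multiset.induction with
  | empty => exact Refines.refl 0
  | cons c C ih =>
    rw [Multiset.sum_cons] at h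
    have hC : C.sum = 0 := eq_zero_of_add_eq_zero ((add_comm _ _).trans h)
    exact Refines.cons (S := 0) (eq_zero_of_add_eq_zero h).symm (ih hC)

theorem le_iff_exists_of_add : A.le a b ↔ ∃ x : A.Total, A.of a + x = A.of b := by
  refine ⟨fun ⟨c, hc⟩ => ⟨A.of c, hc⟩, fun ⟨x, hx⟩ => ?_⟩
  obtain ⟨-, c, -, rfl, -⟩ := exists_of_add_eq_of hx
  exact ⟨c, hx⟩

theorem of_add_compl (a : E) : A.of a + A.of (A.compl a) = A.of A.one := A.oplus_compl a

theorem le_compl_iff : A.le a (A.compl b) ↔ A.of b + A.of a ≠ ⊤ := by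
  rw [le_iff_exists_of_add]
  constructor
  · rintro ⟨x, hx⟩
    refine ne_top_of_add_eq (of_ne_top (a := A.one)) (y := x) ?_
    rw [add_assoc, hx, of_add_compl]
  · intro h
    obtain ⟨d, hd⟩ := ne_top_iff.1 h
    have hsum : A.of b + (A.of a + A.of (A.compl d)) = A.of A.one := by
      rw [← add_assoc, ← hd, of_add_compl]
    refine ⟨_, add_left_cancel_of_ne_top (x := A.of b) ?_ (hsum.trans (of_add_compl b).symm)⟩
    exact hsum ▸ of_ne_top

theorem add_remainders_eq {u w v₁ v₂ u₁ u₂ w₁ w₂ : A.Total} (h : u + w = v₁ + v₂)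
    (hv : v₁ + v₂ ≠ ⊤) (h₁ : u₁ + w₁ = v₁) (h₂ : u₂ + w₂ = v₂) (hu : u₁ + u₂ = u) :
    w₁ + w₂ = w := by
  subst h₁ h₂ hu
  have hsum : u₁ + u₂ + (w₁ + w₂) = u₁ + w₁ + (u₂ + w₂) := add_add_add_comm _ _ _ _
  exact add_left_cancel_of_ne_top (hsum ▸ hv) (hsum.trans h.symm)

end Total

open Total

theorem Homogeneous.exists_refinement (hA : A.Homogeneous) {u w v₁ v₂ : A.Total}
    (h : u + w = v₁ + v₂) (hd : v₁ + v₂ + u ≠ ⊤) :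
    ∃ u₁ u₂ w₁ w₂, u₁ + w₁ = v₁ ∧ u₂ + w₂ = v₂ ∧ u₁ + u₂ = u ∧ w₁ + w₂ = w := by
  have hv := left_ne_top hd
  obtain ⟨s, hs⟩ := ne_top_iff.1 hv
  obtain ⟨v₁, v₂, rfl, rfl, hvs⟩ := exists_of_add_eq_of hs.symm
  obtain ⟨u, -, rfl, -, -⟩ := exists_of_add_eq_of (h.trans hs.symm)
  have hle : A.le u s := le_iff_exists_of_add.2 ⟨w, h.trans hs.symm⟩
  have hle' : A.le u (A.compl s) := le_compl_iff.2 (hs ▸ hd)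
  obtain ⟨u₁, u₂, ⟨w₁, h₁⟩, ⟨w₂, h₂⟩, hu⟩ := hA u v₁ v₂ s hvs hle hle'
  exact ⟨A.of u₁, A.of u₂, A.of w₁, A.of w₂, h₁, h₂, hu,
    add_remainders_eq h hv h₁ h₂ (of_add_of_eq_iff.2 hu)⟩

section Splitting

variable {C C' D S : Multiset A.Total}

/-- Replacing one member `x + y` of a family by `x` and `y`, where `x ≤ (x + y)'`. The latter is
expressed by definedness of `x + y + x`. -/
def SplitStep (C D : Multiset A.Total) : Prop :=
  ∃ x y R, C = (x + y) ::ₘ R ∧ D = x ::ₘ y ::ₘ R ∧ x + y + x ≠ ⊤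

/-- Finitely many successive splitting steps lead from the first family to the second. -/
abbrev Splits : Multiset A.Total → Multiset A.Total → Prop := Relation.ReflTransGen SplitStep

theorem SplitStep.refines (h : SplitStep C D) : Refines D C := by
  obtain ⟨x, y, R, rfl, rfl, -⟩ := h
  exact Refines.cons_cons rfl (Refines.refl R)

theorem SplitStep.add_right (h : SplitStep C D) (F : Multiset A.Total) :
    SplitStep (C + F) (D + F) := by
  obtain ⟨x, y, R, rfl, rfl, hxy⟩ := h
  exact ⟨x, y, R + F, by simp, by simp, hxy⟩

theorem Splits.refines (h : Splits C D) : Refines D C := by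
  induction h with
  | refl => exact Refines.refl C
  | tail _ hstep ih => exact hstep.refines.trans ih

theorem Splits.add_right (h : Splits C D) (F : Multiset A.Total) : Splits (C + F) (D + F) := by
  induction h with
  | refl => exact Relation.ReflTransGen.refl
  | tail _ hstep ih => exact ih.tail (hstep.add_right F)

theorem Homogeneous.exists_splits_of_add_eq_sum (hA : A.Homogeneous) {u w : A.Total}
    (h : u + w = S.sum) (hd : S.sum + u ≠ ⊤) :
    ∃ P Q : Multiset A.Total, P.sum = u ∧ Q.sum = w ∧ Splits S (P + Q) := by
  induction S using Multiset.induction generalizing u w with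
  | empty =>
    rw [Multiset.sum_zero] at h
    have hu := eq_zero_of_add_eq_zero h
    have hw := eq_zero_of_add_eq_zero ((add_comm w u).trans h)
    exact ⟨0, 0, hu.symm, hw.symm, Relation.ReflTransGen.refl⟩
  | cons s S ih =>
    rw [Multiset.sum_cons] at h hd
    obtain ⟨u₁, u₂, w₁, w₂, rfl, h₂, rfl, rfl⟩ := hA.exists_refinement h hd
    have hd₂ : S.sum + u₂ ≠ ⊤ := ne_top_of_add_eq hd (y := u₁ + w₁ + u₁) (by abel)
    obtain ⟨P, Q, rfl, rfl, hsplit⟩ := ih h₂ hd₂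
    have hstep : SplitStep ((u₁ + w₁) ::ₘ (P + Q)) (u₁ ::ₘ w₁ ::ₘ (P + Q)) :=
      ⟨u₁, w₁, P + Q, rfl, rfl, ne_top_of_add_eq hd (y := S.sum + P.sum) (by abel)⟩
    refine ⟨u₁ ::ₘ P, w₁ ::ₘ Q, Multiset.sum_cons _ _, Multiset.sum_cons _ _, ?_⟩
    rw [Multiset.cons_add, Multiset.add_cons]
    refine Relation.ReflTransGen.tail ?_ hstep
    simpa only [add_comm _ {u₁ + w₁}, Multiset.singleton_add] using
      hsplit.add_right {u₁ + w₁}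

theorem Homogeneous.exists_splits_of_splitStep (hA : A.Homogeneous) (h : SplitStep C C')
    (hD : Refines D C) : ∃ D', Splits D D' ∧ Refines D' C' := by
  obtain ⟨x, y, R, rfl, rfl, hxy⟩ := h
  obtain ⟨S, D, rfl, hS, hD⟩ := hD.exists_of_cons
  obtain ⟨P, Q, hP, hQ, hsplit⟩ := hA.exists_splits_of_add_eq_sum hS.symm (hS.symm ▸ hxy)
  refine ⟨P + Q + D, hsplit.add_right D, ?_⟩
  rw [add_assoc]
  exact Refines.cons hP (Refines.cons hQ hD)

theorem Homogeneous.exists_splits_of_splits (hA : A.Homogeneous) (h : Splits C C')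
    (hD : Refines D C) : ∃ D', Splits D D' ∧ Refines D' C' := by
  induction h with
  | refl => exact ⟨D, Relation.ReflTransGen.refl, hD⟩
  | tail _ hstep ih =>
    obtain ⟨D₁, hsplit₁, hD₁⟩ := ih
    obtain ⟨D₂, hsplit₂, hD₂⟩ := hA.exists_splits_of_splitStep hstep hD₁
    exact ⟨D₂, hsplit₁.trans hsplit₂, hD₂⟩

end Splitting

section PartitionSystem

variable {𝒟 : Set (Multiset A.Total)}

/-- A nonempty set of partitions of `1`, directed under refinement. -/
structure IsPartitionSystem (𝒟 : Set (Multiset A.Total)) : Prop where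
  nonempty : 𝒟.Nonempty
  sum_eq_one : ∀ C ∈ 𝒟, C.sum = A.of A.one
  directed : DirectedOn (fun C D => Refines D C) 𝒟

/-- A partition system containing all splittings of its members. Its partial sums behave like the
elements of a block. -/
structure IsSplitClosed (𝒟 : Set (Multiset A.Total)) : Prop extends IsPartitionSystem 𝒟 where
  mem_of_splits : ∀ {C D}, C ∈ 𝒟 → Splits C D → D ∈ 𝒟

/-- All families reached from members of `𝒟` by splitting. -/
def splitClosure (𝒟 : Set (Multiset A.Total)) : Set (Multiset A.Total) :=
  {D | ∃ C ∈ 𝒟, Splits C D}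

/-- The elements of the effect algebra that are sums of subfamilies of members of `𝒟`. -/
def partialSums (𝒟 : Set (Multiset A.Total)) : Set E :=
  {b | ∃ S R : Multiset A.Total, S + R ∈ 𝒟 ∧ S.sum = A.of b}

theorem subset_splitClosure (𝒟 : Set (Multiset A.Total)) : 𝒟 ⊆ splitClosure 𝒟 :=
  fun C hC => ⟨C, hC, Relation.ReflTransGen.refl⟩

theorem partialSums_mono {𝒟' : Set (Multiset A.Total)} (h : 𝒟 ⊆ 𝒟') :
    partialSums 𝒟 ⊆ partialSums 𝒟' :=
  fun _ ⟨S, R, hSR, hb⟩ => ⟨S, R, h hSR, hb⟩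

theorem IsPartitionSystem.isSplitClosed_splitClosure (h𝒟 : IsPartitionSystem 𝒟)
    (hA : A.Homogeneous) : IsSplitClosed (splitClosure 𝒟) where
  nonempty := h𝒟.nonempty.mono (subset_splitClosure 𝒟)
  sum_eq_one := by
    rintro D ⟨C, hC, hCD⟩
    rw [hCD.refines.sum_eq, h𝒟.sum_eq_one C hC]
  directed := by
    rintro D₁ ⟨C₁, hC₁, hsplit₁⟩ D₂ ⟨C₂, hC₂, hsplit₂⟩
    obtain ⟨C, hC, hCC₁, hCC₂⟩ := h𝒟.directed C₁ hC₁ C₂ hC₂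
    obtain ⟨F₁, hCF₁, hF₁⟩ := hA.exists_splits_of_splits hsplit₁ hCC₁
    obtain ⟨F₂, hCF₂, hF₂⟩ := hA.exists_splits_of_splits hsplit₂ hCC₂
    obtain ⟨F, hF₁F, hFF₂⟩ := hA.exists_splits_of_splits hCF₂ hCF₁.refines
    exact ⟨F, ⟨C, hC, hCF₁.trans hF₁F⟩, hF₁F.refines.trans hF₁, hFF₂.trans hF₂⟩
  mem_of_splits := fun ⟨C, hC, hCD⟩ hDF => ⟨C, hC, hCD.trans hDF⟩

theorem IsPartitionSystem.exists_refines_of_mem_partialSums (h𝒟 : IsPartitionSystem 𝒟) {b : E}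
    (hb : b ∈ partialSums 𝒟) {C : Multiset A.Total} (hC : C ∈ 𝒟) :
    ∃ S R, S + R ∈ 𝒟 ∧ S.sum = A.of b ∧ Refines (S + R) C := by
  obtain ⟨S, R, hSR, hS⟩ := hb
  obtain ⟨D, hD, hDSR, hDC⟩ := h𝒟.directed _ hSR _ hC
  obtain ⟨D₁, D₂, rfl, h₁, -⟩ := hDSR.exists_of_add
  exact ⟨D₁, D₂, hD, h₁.sum_eq.trans hS, hDC⟩

namespace IsSplitClosed

-- The part of `T` outside `S` has the sum of a part of `S` outside `T`; both parts being disjoint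
-- subfamilies, homogeneity lets the latter be split accordingly.
theorem exists_splitting_of_sum_add_eq (h𝒟 : IsSplitClosed 𝒟) (hA : A.Homogeneous)
    {S R T T' : Multiset A.Total} {w : A.Total} (hSR : S + R ∈ 𝒟) (hST : S + R = T + T')
    (h : T.sum + w = S.sum) :
    ∃ P Q, P.sum = T.sum ∧ Q.sum = w ∧ Refines (P + Q) S ∧ P + Q + R ∈ 𝒟 := by
  have hone := h𝒟.sum_eq_one _ hSR
  obtain ⟨S₁, S₂, R₁, R₂, rfl, rfl, rfl, rfl⟩ := exists_add_add_of_multiset_add_eq_add hST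
  simp only [Multiset.sum_add] at h hone ⊢
  have hdef : S₁.sum + S₂.sum + (R₁.sum + R₂.sum) ≠ ⊤ := hone ▸ of_ne_top
  have hsum : R₁.sum + w = S₂.sum := by
    rw [add_assoc] at h
    exact add_left_cancel_of_ne_top (h ▸ left_ne_top hdef) h
  have hd : S₂.sum + R₁.sum ≠ ⊤ := ne_top_of_add_eq hdef (y := S₁.sum + R₂.sum) (by abel)
  obtain ⟨P, Q, hP, hQ, hsplit⟩ := hA.exists_splits_of_add_eq_sum hsum hd
  refine ⟨S₁ + P, Q, by rw [Multiset.sum_add, hP], hQ, ?_, ?_⟩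
  · rw [add_assoc]
    exact (Refines.refl S₁).add hsplit.refines
  · have hsplit' := hsplit.add_right (S₁ + (R₁ + R₂))
    rw [← add_assoc, add_comm S₂] at hsplit'
    have hmem := h𝒟.mem_of_splits hSR hsplit'
    rwa [show S₁ + P + Q + (R₁ + R₂) = P + Q + (S₁ + (R₁ + R₂)) by abel]

theorem exists_refines_of_add_eq_sum (h𝒟 : IsSplitClosed 𝒟) (hA : A.Homogeneous) {b : E}
    (hb : b ∈ partialSums 𝒟) {S R : Multiset A.Total} (hSR : S + R ∈ 𝒟) {w : A.Total}
    (h : A.of b + w = S.sum) :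
    ∃ P Q R', P.sum = A.of b ∧ Q.sum = w ∧ Refines (P + Q) S ∧ Refines R' R ∧
      P + Q + R' ∈ 𝒟 := by
  obtain ⟨T, T', hT, hTb, href⟩ := h𝒟.exists_refines_of_mem_partialSums hb hSR
  obtain ⟨S', R', hTS, hS', hR'⟩ := href.exists_of_add
  rw [← hTb, ← hS'.sum_eq] at h
  obtain ⟨P, Q, hP, hQ, hPQ, hmem⟩ :=
    h𝒟.exists_splitting_of_sum_add_eq hA (hTS ▸ hT) hTS.symm h
  exact ⟨P, Q, R', hP.trans hTb, hQ, hPQ.trans hS', hR', hmem⟩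

theorem isSubEA_partialSums (h𝒟 : IsSplitClosed 𝒟) (hA : A.Homogeneous) :
    A.IsSubEA (partialSums 𝒟) := by
  constructor
  · obtain ⟨C, hC⟩ := h𝒟.nonempty
    exact ⟨C, 0, by rwa [add_zero], h𝒟.sum_eq_one C hC⟩
  · rintro a ⟨S, R, hSR, hS⟩ b hb ⟨c, hc⟩
    rw [ominus_eq hc]
    obtain ⟨P, Q, R', -, hQ, -, -, hmem⟩ :=
      h𝒟.exists_refines_of_add_eq_sum hA hb hSR ((of_add_of_eq_iff.2 hc).trans hS.symm)
    exact ⟨Q, P + R', by rwa [← add_assoc, add_comm Q], hQ⟩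

theorem exists_add_add_mem (h𝒟 : IsSplitClosed 𝒟) (hA : A.Homogeneous) {v₁ v₂ s : E}
    (hv₁ : v₁ ∈ partialSums 𝒟) (hv₂ : v₂ ∈ partialSums 𝒟) (hs : A.oplus v₁ v₂ = some s) :
    ∃ V₁ V₂ R : Multiset A.Total, V₁.sum = A.of v₁ ∧ V₂.sum = A.of v₂ ∧ V₁ + V₂ + R ∈ 𝒟 := by
  obtain ⟨S, R, hSR, hS⟩ := hv₁
  have hone : A.of v₁ + R.sum = A.of A.one := by
    rw [← hS, ← Multiset.sum_add, h𝒟.sum_eq_one _ hSR]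
  have hR : A.of v₂ + A.of (A.compl s) = R.sum := by
    refine add_left_cancel_of_ne_top (x := A.of v₁) ?_ ?_ <;>
      rw [← add_assoc, of_add_of_eq_iff.2 hs, of_add_compl]
    exacts [of_ne_top, hone.symm]
  obtain ⟨V₂, Q, V₁, hV₂, -, -, hV₁, hmem⟩ :=
    h𝒟.exists_refines_of_add_eq_sum hA hv₂ (add_comm S R ▸ hSR) hR
  refine ⟨V₁, V₂, Q, hV₁.sum_eq.trans hS, hV₂, ?_⟩
  rwa [add_assoc, add_comm]

theorem rdpOn_partialSums (h𝒟 : IsSplitClosed 𝒟) (hA : A.Homogeneous) :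
    A.RDPOn (partialSums 𝒟) := by
  rintro u v₁ v₂ s hu hv₁ hv₂ hs ⟨w, hw⟩
  obtain ⟨V₁, V₂, R, hV₁, hV₂, hmem⟩ := h𝒟.exists_add_add_mem hA hv₁ hv₂ hs
  have hsum : A.of u + A.of w = (V₁ + V₂).sum := by
    rw [Multiset.sum_add, hV₁, hV₂, of_add_of_eq_iff.2 hs, of_add_of_eq_iff.2 hw]
  obtain ⟨U, W, R', hU, -, hUW, -, hmem'⟩ := h𝒟.exists_refines_of_add_eq_sum hA hu hmem hsum
  obtain ⟨D₁, D₂, hD, hD₁, hD₂⟩ := hUW.exists_of_add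
  obtain ⟨U₁, U₂, W₁, W₂, rfl, rfl, rfl, rfl⟩ := exists_add_add_of_multiset_add_eq_add hD
  rw [Multiset.sum_add] at hU
  obtain ⟨u₁, u₂, hu₁, hu₂, hu⟩ := exists_of_add_eq_of hU
  refine ⟨u₁, u₂, ⟨U₁, U₂ + (W₁ + W₂) + R', ?_, hu₁⟩, ⟨U₂, U₁ + (W₁ + W₂) + R', ?_, hu₂⟩,
    le_iff_exists_of_add.2 ⟨W₁.sum, ?_⟩, le_iff_exists_of_add.2 ⟨W₂.sum, ?_⟩, hu⟩
  · convert hmem' using 1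
    abel
  · convert hmem' using 1
    abel
  · rw [← hu₁, ← Multiset.sum_add, hD₁.sum_eq, hV₁]
  · rw [← hu₂, ← Multiset.sum_add, hD₂.sum_eq, hV₂]

theorem mem_partialSums_of_le_of_le_compl (h𝒟 : IsSplitClosed 𝒟) (hA : A.Homogeneous) {u y : E}
    (hy : y ∈ partialSums 𝒟) (hu : A.le u y) (hu' : A.le u (A.compl y)) :
    u ∈ partialSums 𝒟 := by
  obtain ⟨S, R, hSR, hS⟩ := hy
  obtain ⟨w, hw⟩ := hu
  obtain ⟨P, Q, hP, -, hsplit⟩ := hA.exists_splits_of_add_eq_sum (S := S)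
    ((of_add_of_eq_iff.2 hw).trans hS.symm) (hS ▸ le_compl_iff.1 hu')
  refine ⟨P, Q + R, ?_, hP⟩
  rw [← add_assoc]
  exact h𝒟.mem_of_splits hSR (hsplit.add_right R)

end IsSplitClosed

end PartitionSystem

section SubEffectAlgebra

variable {B : Set E}

namespace IsSubEA

variable {a b c : E}

theorem mem_of_oplus_eq (hB : A.IsSubEA B) (h : A.oplus b c = some a) (ha : a ∈ B)
    (hb : b ∈ B) : c ∈ B :=
  ominus_eq h ▸ hB.2 a ha b hb ⟨c, h⟩

theorem zero_mem (hB : A.IsSubEA B) : A.zero ∈ B :=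
  hB.mem_of_oplus_eq A.one_oplus_zero hB.1 hB.1

theorem compl_mem (hB : A.IsSubEA B) (ha : a ∈ B) : A.compl a ∈ B :=
  hB.mem_of_oplus_eq (A.oplus_compl a) hB.1 ha

theorem oplus_mem (hB : A.IsSubEA B) (ha : a ∈ B) (hb : b ∈ B) (h : A.oplus a b = some c) :
    c ∈ B := by
  obtain ⟨d, hbd, had⟩ := A.assoc _ _ _ _ _ h (A.oplus_compl c)
  have hc : A.compl c ∈ B := hB.mem_of_oplus_eq hbd (hB.mem_of_oplus_eq had hB.1 ha) hb
  exact hB.mem_of_oplus_eq (by rw [A.comm, A.oplus_compl]) hB.1 hc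

theorem sum_mem (hB : A.IsSubEA B) {S : Multiset A.Total} (hS : ∀ x ∈ S, x ∈ A.of '' B)
    (hd : S.sum ≠ ⊤) : S.sum ∈ A.of '' B := by
  induction S using Multiset.induction with
  | empty => exact ⟨A.zero, hB.zero_mem, rfl⟩
  | cons s S ih =>
    rw [Multiset.forall_mem_cons] at hS
    rw [Multiset.sum_cons] at hd ⊢
    obtain ⟨a, ha, rfl⟩ := hS.1
    obtain ⟨b, hb, hbS⟩ := ih hS.2 (left_ne_top ((add_comm _ _).trans_ne hd))
    rw [← hbS] at hd ⊢
    obtain ⟨c, hc⟩ := ne_top_iff.1 hd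
    exact ⟨c, hB.oplus_mem ha hb hc.symm, hc⟩

end IsSubEA

theorem RDPOn.exists_refinement (hB : A.IsSubEA B) (hR : A.RDPOn B) {u w v₁ v₂ : A.Total}
    (hu : u ∈ A.of '' B) (hv₁ : v₁ ∈ A.of '' B) (hv₂ : v₂ ∈ A.of '' B) (h : u + w = v₁ + v₂)
    (hd : v₁ + v₂ ≠ ⊤) :
    ∃ u₁ ∈ A.of '' B, ∃ u₂ ∈ A.of '' B, ∃ w₁ ∈ A.of '' B, ∃ w₂ ∈ A.of '' B,
      u₁ + w₁ = v₁ ∧ u₂ + w₂ = v₂ ∧ u₁ + u₂ = u ∧ w₁ + w₂ = w := by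
  obtain ⟨u, hu, rfl⟩ := hu
  obtain ⟨v₁, hv₁, rfl⟩ := hv₁
  obtain ⟨v₂, hv₂, rfl⟩ := hv₂
  obtain ⟨s, hs⟩ := ne_top_iff.1 hd
  have hle : A.le u s := le_iff_exists_of_add.2 ⟨w, h.trans hs.symm⟩
  obtain ⟨u₁, u₂, hu₁, hu₂, ⟨w₁, h₁⟩, ⟨w₂, h₂⟩, hsum⟩ := hR u v₁ v₂ s hu hv₁ hv₂ hs.symm hle
  exact ⟨A.of u₁, ⟨u₁, hu₁, rfl⟩, A.of u₂, ⟨u₂, hu₂, rfl⟩,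
    A.of w₁, ⟨w₁, hB.mem_of_oplus_eq h₁ hv₁ hu₁, rfl⟩,
    A.of w₂, ⟨w₂, hB.mem_of_oplus_eq h₂ hv₂ hu₂, rfl⟩,
    h₁, h₂, hsum, add_remainders_eq h hd h₁ h₂ (of_add_of_eq_iff.2 hsum)⟩

theorem RDPOn.exists_refines_of_add_eq_sum (hB : A.IsSubEA B) (hR : A.RDPOn B)
    {S : Multiset A.Total} (hS : ∀ x ∈ S, x ∈ A.of '' B) {u w : A.Total} (hu : u ∈ A.of '' B)
    (h : u + w = S.sum) (hd : S.sum ≠ ⊤) :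
    ∃ P Q : Multiset A.Total, P.sum = u ∧ Q.sum = w ∧ Refines (P + Q) S ∧
      ∀ x ∈ P + Q, x ∈ A.of '' B := by
  induction S using Multiset.induction generalizing u w with
  | empty =>
    rw [Multiset.sum_zero] at h
    have hu := eq_zero_of_add_eq_zero h
    have hw := eq_zero_of_add_eq_zero ((add_comm w u).trans h)
    exact ⟨0, 0, hu.symm, hw.symm, Refines.refl 0, hS⟩
  | cons s S ih =>
    rw [Multiset.forall_mem_cons] at hS
    rw [Multiset.sum_cons] at h hd
    have hdS : S.sum ≠ ⊤ := left_ne_top ((add_comm _ _).trans_ne hd)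
    obtain ⟨u₁, hu₁, u₂, hu₂, w₁, hw₁, w₂, -, h₁, h₂, rfl, rfl⟩ :=
      hR.exists_refinement hB hu hS.1 (hB.sum_mem hS.2 hdS) h hd
    obtain ⟨P, Q, rfl, rfl, href, hmem⟩ := ih hS.2 hu₂ h₂ hdS
    refine ⟨u₁ ::ₘ P, w₁ ::ₘ Q, Multiset.sum_cons _ _, Multiset.sum_cons _ _, ?_⟩
    rw [Multiset.cons_add, Multiset.add_cons]
    exact ⟨Refines.cons_cons h₁ href,
      Multiset.forall_mem_cons.2 ⟨hu₁, Multiset.forall_mem_cons.2 ⟨hw₁, hmem⟩⟩⟩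

theorem RDPOn.exists_common_refinement (hB : A.IsSubEA B) (hR : A.RDPOn B)
    {C D : Multiset A.Total} (hC : ∀ x ∈ C, x ∈ A.of '' B) (hD : ∀ x ∈ D, x ∈ A.of '' B)
    (h : C.sum = D.sum) (hd : D.sum ≠ ⊤) :
    ∃ F, Refines F C ∧ Refines F D ∧ ∀ x ∈ F, x ∈ A.of '' B := by
  induction C using Multiset.induction generalizing D with
  | empty => exact ⟨0, Refines.refl 0, refines_zero_of_sum_eq_zero h.symm, hC⟩
  | cons c C ih =>
    rw [Multiset.forall_mem_cons] at hC
    rw [Multiset.sum_cons] at h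
    obtain ⟨P, Q, hP, hQ, hPQ, hmem⟩ := hR.exists_refines_of_add_eq_sum hB hD hC.1 h hd
    have hdQ : Q.sum ≠ ⊤ := ne_top_of_add_eq hd (y := c) (by rw [hQ, add_comm, h])
    obtain ⟨F, hFC, hFQ, hF⟩ :=
      ih hC.2 (fun x hx => hmem x (Multiset.mem_add.2 (Or.inr hx))) hQ.symm hdQ
    refine ⟨P + F, Refines.cons hP hFC, ((Refines.refl P).add hFQ).trans hPQ, fun x hx => ?_⟩
    rcases Multiset.mem_add.1 hx with hx | hx
    exacts [hmem x (Multiset.mem_add.2 (Or.inl hx)), hF x hx]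

/-- The partitions of `1` with all members in `B`. -/
def partitionsIn (A : EffectAlgebra E) (B : Set E) : Set (Multiset A.Total) :=
  {C | C.sum = A.of A.one ∧ ∀ x ∈ C, x ∈ A.of '' B}

theorem RDPOn.isPartitionSystem_partitionsIn (hB : A.IsSubEA B) (hR : A.RDPOn B) :
    IsPartitionSystem (A.partitionsIn B) where
  nonempty := ⟨{A.of A.one}, Multiset.sum_singleton _, by simpa using ⟨A.one, hB.1, rfl⟩⟩
  sum_eq_one := fun _ hC => hC.1
  directed := by
    rintro C ⟨hC, hCB⟩ D ⟨hD, hDB⟩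
    obtain ⟨F, hFC, hFD, hFB⟩ :=
      hR.exists_common_refinement hB hCB hDB (hC.trans hD.symm) (hD ▸ of_ne_top)
    exact ⟨F, ⟨hFC.sum_eq.trans hC, hFB⟩, hFC, hFD⟩

theorem IsSubEA.subset_partialSums_partitionsIn (hB : A.IsSubEA B) :
    B ⊆ partialSums (A.partitionsIn B) := by
  intro b hb
  refine ⟨{A.of b}, {A.of (A.compl b)}, ⟨?_, ?_⟩, Multiset.sum_singleton _⟩
  · rw [Multiset.sum_add, Multiset.sum_singleton, Multiset.sum_singleton, of_add_compl]
  · simp [of_injective.eq_iff, hb, hB.compl_mem hb]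

theorem isSubEA_and_rdpOn_sUnion {c : Set (Set E)} (hc : ∀ B ∈ c, A.IsSubEA B ∧ A.RDPOn B)
    (hchain : IsChain (· ⊆ ·) c) (hne : c.Nonempty) :
    A.IsSubEA (⋃₀ c) ∧ A.RDPOn (⋃₀ c) := by
  have hdir := hchain.directedOn
  refine ⟨⟨?_, ?_⟩, ?_⟩
  · obtain ⟨B, hB⟩ := hne
    exact ⟨B, hB, (hc B hB).1.1⟩
  · rintro a ⟨B₁, hB₁, ha⟩ b ⟨B₂, hB₂, hb⟩ hba
    obtain ⟨B, hB, h₁, h₂⟩ := hdir B₁ hB₁ B₂ hB₂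
    exact ⟨B, hB, (hc B hB).1.2 a (h₁ ha) b (h₂ hb) hba⟩
  · rintro u v₁ v₂ s ⟨B₀, hB₀, hu⟩ ⟨B₁, hB₁, hv₁⟩ ⟨B₂, hB₂, hv₂⟩ hs hus
    obtain ⟨B', hB', h₀, h₁⟩ := hdir B₀ hB₀ B₁ hB₁
    obtain ⟨B, hB, h', h₂⟩ := hdir B' hB' B₂ hB₂
    obtain ⟨u₁, u₂, hu₁, hu₂, hdecomp⟩ :=
      (hc B hB).2 u v₁ v₂ s (h' (h₀ hu)) (h' (h₁ hv₁)) (h₂ hv₂) hs hus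
    exact ⟨u₁, u₂, ⟨B, hB, hu₁⟩, ⟨B, hB, hu₂⟩, hdecomp⟩

theorem RDPOn.exists_isBlock_superset (hB : A.IsSubEA B) (hR : A.RDPOn B) :
    ∃ B', A.IsBlock B' ∧ B ⊆ B' := by
  obtain ⟨B', hBB', hmax⟩ := zorn_subset_nonempty {B | A.IsSubEA B ∧ A.RDPOn B}
    (fun c hc hchain hne => ⟨⋃₀ c, isSubEA_and_rdpOn_sUnion (fun _ hB => hc hB) hchain hne,
      fun _ => Set.subset_sUnion_of_mem⟩) B ⟨hB, hR⟩
  exact ⟨B', ⟨hmax.prop.1, hmax.prop.2,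
    fun _ hS hR hle => (hmax.eq_of_subset ⟨hS, hR⟩ hle).symm⟩, hBB'⟩

end SubEffectAlgebra

section Block

variable {B : Set E} {a : E}

theorem Homogeneous.exists_isBlock_mem (hA : A.Homogeneous) (a : E) :
    ∃ B, A.IsBlock B ∧ a ∈ B := by
  have hsys : IsPartitionSystem {({A.of a} + {A.of (A.compl a)} : Multiset A.Total)} :=
    { nonempty := Set.singleton_nonempty _
      sum_eq_one := by
        rintro C rfl
        rw [Multiset.sum_add, Multiset.sum_singleton, Multiset.sum_singleton, of_add_compl]
      directed := by
        rintro C rfl D rfl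
        exact ⟨_, rfl, Refines.refl _, Refines.refl _⟩ }
  have hclosed := hsys.isSplitClosed_splitClosure hA
  obtain ⟨B, hB, hsub⟩ :=
    (hclosed.rdpOn_partialSums hA).exists_isBlock_superset (hclosed.isSubEA_partialSums hA)
  refine ⟨B, hB, hsub (partialSums_mono (subset_splitClosure _) ?_)⟩
  exact ⟨{A.of a}, {A.of (A.compl a)}, rfl, Multiset.sum_singleton _⟩

theorem IsBlock.mem_of_le_of_le_compl (hB : A.IsBlock B) (hA : A.Homogeneous) {u y : E}
    (hy : y ∈ B) (hu : A.le u y) (hu' : A.le u (A.compl y)) : u ∈ B := by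
  obtain ⟨hS, hR, hmax⟩ := hB
  have hclosed := (hR.isPartitionSystem_partitionsIn hS).isSplitClosed_splitClosure hA
  have hsub : B ⊆ partialSums (splitClosure (A.partitionsIn B)) :=
    hS.subset_partialSums_partitionsIn.trans (partialSums_mono (subset_splitClosure _))
  rw [← hmax _ (hclosed.isSubEA_partialSums hA) (hclosed.rdpOn_partialSums hA) hsub]
  exact hclosed.mem_partialSums_of_le_of_le_compl hA (hsub hy) hu hu'

theorem IsBlock.sharp_of_principalIn (hB : A.IsBlock B) (hA : A.Homogeneous)
    (ha : A.PrincipalIn B a) : A.Sharp a := by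
  intro w hwa hwa'
  have hw : w ∈ B := hB.mem_of_le_of_le_compl hA ha.1 hwa hwa'
  obtain ⟨s, hs⟩ := ne_top_iff.1 (le_compl_iff.1 hwa')
  have hs : A.oplus a w = some s := hs.symm
  have hsa : A.le s a := ha.2 a ha.1 w hw s (A.le_refl a) hwa hs
  rw [A.le_antisymm hsa ⟨w, hs⟩] at hs
  exact oplus_left_cancel hs (A.oplus_zero a)

theorem RDPOn.le_left_of_le_oplus (hR : A.RDPOn B) {p q r s : E} (hp : p ∈ B) (hq : q ∈ B)
    (hr : r ∈ B) (hs : A.oplus q r = some s) (hps : A.le p s)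
    (hdisj : ∀ t, A.le t p → A.le t r → t = A.zero) : A.le p q := by
  obtain ⟨t₁, t₂, -, -, ht₁, ht₂, ht⟩ := hR p q r s hp hq hr hs hps
  rw [hdisj t₂ (le_of_oplus_eq_right ht) ht₂] at ht
  rwa [← eq_of_oplus_zero ht]

namespace Sharp

theorem eq_zero_of_le (ha : A.Sharp a) {p q t : E} (hp : A.le p a) (hq : A.le q (A.compl a))
    (htp : A.le t p) (htq : A.le t q) : t = A.zero :=
  ha t (A.le_trans htp hp) (A.le_trans htq hq)

theorem principalIn (ha : A.Sharp a) (hB : A.IsSubEA B) (hR : A.RDPOn B) (haB : a ∈ B) :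
    A.PrincipalIn B a := by
  refine ⟨haB, fun x hx y hy s hxa hya hs => ?_⟩
  obtain ⟨s₁, s₂, -, hs₂B, hs₁, hs₂, hdecomp⟩ := hR s a (A.compl a) A.one
    (hB.oplus_mem hx hy hs) haB (hB.compl_mem haB) (A.oplus_compl a) (A.le_one s)
  have hs₂x : A.le s₂ x := hR.le_left_of_le_oplus hs₂B hx hy hs (le_of_oplus_eq_right hdecomp)
    fun t hts hty => ha.eq_zero_of_le hya hs₂ hty hts
  rw [ha s₂ (A.le_trans hs₂x hxa) hs₂] at hdecomp
  rwa [← eq_of_oplus_zero hdecomp]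

theorem centralIn (ha : A.Sharp a) (hB : A.IsSubEA B) (hR : A.RDPOn B) (haB : a ∈ B) :
    A.CentralIn B a := by
  refine ⟨ha.principalIn hB hR haB, fun b hb => ?_⟩
  have le_of_decompositions : ∀ {p p' q q'}, p ∈ B → q ∈ B → q' ∈ B → A.le p a →
      A.le q' (A.compl a) → A.oplus p p' = some b → A.oplus q q' = some b → A.le p q :=
    fun hp hq hq' hpa hqa hpb hqb => hR.le_left_of_le_oplus hp hq hq' hqb ⟨_, hpb⟩
      fun _ htp htq => ha.eq_zero_of_le hpa hqa htp htq
  obtain ⟨b₁, b₂, hb₁, hb₂, hb₁a, hb₂a, hsum⟩ := hR b a (A.compl a) A.one hb haB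
    (hB.compl_mem haB) (A.oplus_compl a) (A.le_one b)
  refine ⟨(b₁, b₂), ⟨hb₁, hb₂, hb₁a, hb₂a, hsum⟩, ?_⟩
  rintro ⟨c₁, c₂⟩ ⟨hc₁, hc₂, hc₁a, hc₂a, hsum'⟩
  dsimp only at hsum'
  obtain rfl : c₁ = b₁ := A.le_antisymm
    (le_of_decompositions hc₁ hb₁ hb₂ hc₁a hb₂a hsum' hsum)
    (le_of_decompositions hb₁ hc₁ hc₂ hb₁a hc₂a hsum hsum')
  rw [oplus_left_cancel hsum' hsum]

end Sharp

end Block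

end EffectAlgebra

/-- For an element `a` of a homogeneous effect algebra, the
following are equivalent: (a) `a` is sharp; (b) `a` is central in every block
containing `a`; (c) `a` is central in some block. -/
theorem sharp_iff_central_in_blocks {E : Type*} (A : EffectAlgebra E)
    (hH : A.Homogeneous) (a : E) :
    (A.Sharp a ↔ ∀ B : Set E, A.IsBlock B → a ∈ B → A.CentralIn B a) ∧
    (A.Sharp a ↔ ∃ B : Set E, A.IsBlock B ∧ A.CentralIn B a) := by
  obtain ⟨B, hB, haB⟩ := hH.exists_isBlock_mem a
  have central_of_sharp (ha : A.Sharp a) {B : Set E} (hB : A.IsBlock B) (haB : a ∈ B) :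
      A.CentralIn B a := ha.centralIn hB.1 hB.2.1 haB
  have sharp_of_central {B : Set E} (hB : A.IsBlock B) (ha : A.CentralIn B a) : A.Sharp a :=
    hB.sharp_of_principalIn hH ha.1
  exact ⟨⟨fun ha _ => central_of_sharp ha, fun h => sharp_of_central hB (h B hB haB)⟩,
    ⟨fun ha => ⟨B, hB, central_of_sharp ha hB haB⟩, fun ⟨_, hB, ha⟩ => sharp_of_central hB ha⟩⟩
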